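/- Let n, k be natural numbers and let J be a real ideal of the polynomial ring ℝ[x₁,…,xₙ], i.e. whenever p₁² + ⋯ + p_m² ∈ J with p_i ∈ ℝ[x₁,…,xₙ], each p_i ∈ J. Let ε : ℝ[x₁,…,xₙ] → R^k(ℝⁿ) be the ring homomorphism sending a polynomial to its evaluation function (which is k-regulous). Then the radical of the ideal of R^k(ℝⁿ) generated by ε(J) equals the ideal {f ∈ R^k(ℝⁿ) : f(x) = 0 for every x ∈ Z(J)}, where Z(J) = {x ∈ ℝⁿ : p(x) = 0 for all p ∈ J}. -/

import Mathlib

open MvPolynomial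

/-- A function `f : ℝⁿ → ℝ` is `k`-regulous if it is of class `C^k` on all of `ℝⁿ` and
agrees with a rational function: there are polynomials `p`, `q` with `q ≠ 0` and
`q(x) * f(x) = p(x)` for every `x`. -/
def IsRegulous (n k : ℕ) (f : (Fin n → ℝ) → ℝ) : Prop :=
  ContDiff ℝ k f ∧ ∃ p q : MvPolynomial (Fin n) ℝ, q ≠ 0 ∧
    ∀ x : Fin n → ℝ, eval x q * f x = eval x p

/-- The ring `R^k(ℝⁿ)` of `k`-regulous functions, as a subring of the ring of all
functions `ℝⁿ → ℝ` with pointwise operations. -/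
def regulousRing (n k : ℕ) : Subring ((Fin n → ℝ) → ℝ) where
  carrier := {f | IsRegulous n k f}
  one_mem' := ⟨contDiff_const, 1, 1, one_ne_zero, by simp⟩
  zero_mem' := ⟨contDiff_const, 0, 1, one_ne_zero, by simp⟩
  mul_mem' := by
    rintro f g ⟨hf, p₁, q₁, hq₁, h₁⟩ ⟨hg, p₂, q₂, hq₂, h₂⟩
    refine ⟨hf.mul hg, p₁ * p₂, q₁ * q₂, mul_ne_zero hq₁ hq₂, fun x => ?_⟩
    simp only [eval_mul, Pi.mul_apply]
    linear_combination (eval x q₂ * g x) * h₁ x + eval x p₁ * h₂ x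
  add_mem' := by
    rintro f g ⟨hf, p₁, q₁, hq₁, h₁⟩ ⟨hg, p₂, q₂, hq₂, h₂⟩
    refine ⟨hf.add hg, p₁ * q₂ + p₂ * q₁, q₁ * q₂, mul_ne_zero hq₁ hq₂, fun x => ?_⟩
    simp only [eval_mul, eval_add, Pi.add_apply]
    linear_combination (eval x q₂) * h₁ x + (eval x q₁) * h₂ x
  neg_mem' := by
    rintro f ⟨hf, p, q, hq, h⟩
    refine ⟨hf.neg, -p, q, hq, fun x => ?_⟩
    simp only [map_neg, Pi.neg_apply]
    linear_combination -(h x)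

/-!
Choose a polynomial `P ∈ J`, a sum of squares of generators of `J`, whose zero set is `Z(J)`.
If a regulous `f` vanishes on `Z(J)`, then `|f| ^ N ≤ C |P|` for some `N` and some continuous `C`
(a Łojasiewicz inequality), and this forces `f ^ M / P`, extended by `0`, to be of class `C^k` for
large `M`. Hence `f ^ M` is a multiple of `P` in the ring of regulous functions.

The Łojasiewicz inequality is proved algebraically. Let `f = p / q` and let `m(s)` be the infimum of
`s P² + |x|² + 1 / f²`. Since `f` vanishes wherever `P` does, `m(s) → ∞` as `s → ∞`. The infimum
need not be attained, so replace `1 / f² = q² / p²` by `(q² + d) / p²` with `d > 0`: the minimum is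
now a critical value, and by an algebraic Sard argument (a derivation of a field extension of
characteristic zero can be prescribed on an algebraically independent family) critical values
satisfy a polynomial relation with the parameters `d` and `s`. Letting `d → 0` gives a nontrivial
polynomial relation between `m(s)` and `s`, so `s ≤ C m(s) ^ a` for large `s`. Taking
`s ≈ 1 / P(x)²` and bounding `m(s)` by the value at `x` yields the inequality.
-/

open Filter Topology TensorProduct

section Derivations

theorem derivation_aeval_mvPolynomial {R A M σ : Type*} [CommSemiring R] [CommSemiring A]
    [Algebra R A] [AddCommMonoid M] [Module R M] [Module A M] [IsScalarTower R A M] [Fintype σ]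
    (D : Derivation R A M) (f : σ → A) (p : MvPolynomial σ R) :
    D (aeval f p) = ∑ i, aeval f (pderiv i p) • D (f i) := by
  classical
  induction p using MvPolynomial.induction_on with
  | C a => simp
  | add p q hp hq => simp only [map_add, hp, hq, add_smul, Finset.sum_add_distrib]
  | mul_X p j hp =>
    simp [hp, pderiv_X, Pi.single_apply, apply_ite, add_smul, Finset.sum_add_distrib,
      Finset.smul_sum, mul_smul]

theorem mapBaseChange_injective_of_formallySmooth (R S L : Type*) [CommRing R] [CommRing S]
    [CommRing L] [Algebra R S] [Algebra R L] [Algebra S L] [IsScalarTower R S L]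
    [Algebra.FormallySmooth S L] :
    Function.Injective (KaehlerDifferential.mapBaseChange R S L) := by
  rw [injective_iff_map_eq_zero]
  intro x hx
  obtain ⟨y, rfl⟩ := (Algebra.H1Cotangent.exact_δ_mapBaseChange R S L x).mp hx
  rw [Subsingleton.elim y 0, map_zero]

theorem exists_derivation_algebraMap_eq {R S L : Type*} [CommRing R] [CommRing S] [Field L]
    [Algebra R S] [Algebra R L] [Algebra S L] [IsScalarTower R S L] [Algebra.FormallySmooth S L]
    (D : Derivation R S L) :
    ∃ D' : Derivation R L L, ∀ s, D' (algebraMap S L s) = D s := by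
  obtain ⟨r, hr⟩ := (KaehlerDifferential.mapBaseChange R S L).exists_leftInverse_of_injective
    (LinearMap.ker_eq_bot.2 (mapBaseChange_injective_of_formallySmooth R S L))
  let ψ : Ω[L⁄R] →ₗ[L] L := D.liftKaehlerDifferential.liftBaseChange L ∘ₗ r
  refine ⟨ψ.compDer (KaehlerDifferential.D R L), fun s => ?_⟩
  have hD : KaehlerDifferential.D R L (algebraMap S L s) =
      KaehlerDifferential.mapBaseChange R S L (1 ⊗ₜ KaehlerDifferential.D R S s) := by simp
  calc ψ (KaehlerDifferential.D R L (algebraMap S L s))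
      = D.liftKaehlerDifferential.liftBaseChange L (1 ⊗ₜ KaehlerDifferential.D R S s) := by
        rw [hD, LinearMap.comp_apply, ← LinearMap.comp_apply r, hr, LinearMap.id_apply]
    _ = D s := by simp

theorem formallySmooth_of_faithfulSMul_of_charZero (K S L : Type*) [Field K] [CharZero K]
    [CommRing S] [IsDomain S] [Field L] [Algebra K S] [Algebra K L] [Algebra S L]
    [IsScalarTower K S L] [Algebra.EssFiniteType K L] [FaithfulSMul S L] :
    Algebra.FormallySmooth S L := by
  let Q := FractionRing S
  let _ : Algebra Q L := FractionRing.liftAlgebra S L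
  have : IsScalarTower S Q L := FractionRing.isScalarTower_liftAlgebra S L
  have : IsScalarTower K Q L := .to₁₃₄ K S Q L
  have : Algebra.EssFiniteType Q L := .of_comp K Q L
  have : CharZero Q := charZero_of_injective_algebraMap (algebraMap K Q).injective
  have : Algebra.FormallySmooth S Q := .of_isLocalization (nonZeroDivisors S)
  exact .comp S Q L

theorem exists_derivation_eq_of_algebraicIndependent {K L κ : Type*} [Field K] [CharZero K]
    [Field L] [Algebra K L] [Algebra.EssFiniteType K L] {c : κ → L}
    (hc : AlgebraicIndependent K c) (v : κ → L) :
    ∃ D : Derivation K L L, ∀ j, D (c j) = v j := by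
  let _ : Algebra (MvPolynomial κ K) L := (aeval c).toAlgebra
  have : IsScalarTower K (MvPolynomial κ K) L := .of_algHom (aeval c)
  have : FaithfulSMul (MvPolynomial κ K) L := (faithfulSMul_iff_algebraMap_injective _ L).2 hc
  have := formallySmooth_of_faithfulSMul_of_charZero K (MvPolynomial κ K) L
  obtain ⟨D, hD⟩ := exists_derivation_algebraMap_eq (mkDerivation K v)
  refine ⟨D, fun j => ?_⟩
  rw [← mkDerivation_X K v j, ← hD]
  exact congrArg D (aeval_X c j).symm

end Derivations

section Elimination

variable {ι κ : Type*}

theorem exists_mem_mul_mem_radical {R : Type*} [CommRing R] {I : Ideal R} {S : Submonoid R}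
    {a : R} (h : ∀ 𝔭 : Ideal R, 𝔭.IsPrime → I ≤ 𝔭 → ∃ s ∈ S, s * a ∈ 𝔭) :
    ∃ s ∈ S, s * a ∈ I.radical := by
  by_contra! hS
  have hdisj : Disjoint (I : Set R) (S ⊔ Submonoid.powers a : Submonoid R) := by
    rw [Set.disjoint_right]
    intro x hx hxI
    obtain ⟨s, hs, _, ⟨m, rfl⟩, rfl⟩ := Submonoid.mem_sup.1 hx
    refine hS s hs ⟨m + 1, ?_⟩
    have : (s * a) ^ (m + 1) = s ^ m * a * (s * a ^ m) := by ring
    exact this ▸ I.mul_mem_left _ hxI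
  obtain ⟨𝔭, h𝔭, hI, h𝔭S⟩ := Ideal.exists_le_prime_disjoint I _ hdisj
  obtain ⟨s, hs, hsa⟩ := h 𝔭 h𝔭 hI
  exact Set.disjoint_left.1 h𝔭S hsa
    (Submonoid.mul_mem_sup hs (Submonoid.mem_powers a))

variable {K : Type*} [Field K] [CharZero K]

theorem aeval_pderiv_inr_eq_zero [Finite ι] [Finite κ] {L : Type*} [Field L] [Algebra K L]
    [Algebra.EssFiniteType K L] {x : ι → L} {c : κ → L} (hc : AlgebraicIndependent K c)
    {E : MvPolynomial (ι ⊕ κ) K} (hE : aeval (Sum.elim x c) E = 0)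
    (hE' : ∀ i, aeval (Sum.elim x c) (pderiv (Sum.inl i) E) = 0) (j : κ) :
    aeval (Sum.elim x c) (pderiv (Sum.inr j) E) = 0 := by
  classical
  have := Fintype.ofFinite ι
  have := Fintype.ofFinite κ
  obtain ⟨D, hD⟩ := exists_derivation_eq_of_algebraicIndependent hc (Pi.single j 1)
  have hDE := derivation_aeval_mvPolynomial D (Sum.elim x c) E
  simpa [hE, hE', hD, Fintype.sum_sum_type, Pi.single_apply] using hDE.symm

theorem exists_rename_mul_pderiv_mem_of_isPrime [Finite ι] [Finite κ]
    {E : MvPolynomial (ι ⊕ κ) K} {𝔭 : Ideal (MvPolynomial (ι ⊕ κ) K)} [𝔭.IsPrime]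
    (hE : E ∈ 𝔭) (hE' : ∀ i, pderiv (Sum.inl i) E ∈ 𝔭) (j : κ) :
    ∃ F : MvPolynomial κ K, F ≠ 0 ∧ rename Sum.inr F * pderiv (Sum.inr j) E ∈ 𝔭 := by
  let L := FractionRing (MvPolynomial (ι ⊕ κ) K ⧸ 𝔭)
  have : Algebra.EssFiniteType K L := .comp K (MvPolynomial (ι ⊕ κ) K ⧸ 𝔭) L
  let π : MvPolynomial (ι ⊕ κ) K →ₐ[K] L := IsScalarTower.toAlgHom K _ L
  have hπ (g : MvPolynomial (ι ⊕ κ) K) : π g = 0 ↔ g ∈ 𝔭 := by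
    change algebraMap (MvPolynomial (ι ⊕ κ) K ⧸ 𝔭) L (Ideal.Quotient.mk 𝔭 g) = 0 ↔ _
    rw [FaithfulSMul.algebraMap_eq_zero_iff, Ideal.Quotient.eq_zero_iff_mem]
  let x : ι → L := fun i => π (X (Sum.inl i))
  let c : κ → L := fun j => π (X (Sum.inr j))
  have hxc (g : MvPolynomial (ι ⊕ κ) K) : aeval (Sum.elim x c) g = π g := by
    have hπX : Sum.elim x c = π ∘ X := by ext (i | j) <;> rfl
    rw [hπX, ← aeval_unique π]
  by_cases hc : AlgebraicIndependent K c
  · refine ⟨1, one_ne_zero, 𝔭.mul_mem_left _ ?_⟩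
    have := aeval_pderiv_inr_eq_zero (x := x) hc (E := E)
    simp only [hxc, hπ] at this
    exact this hE hE' j
  · rw [algebraicIndependent_iff] at hc
    push Not at hc
    obtain ⟨F, hF, hF0⟩ := hc
    refine ⟨F, hF0, 𝔭.mul_mem_right _ ?_⟩
    rw [← hπ, ← hxc, aeval_rename, Sum.elim_comp_inr, hF]

theorem exists_rename_mul_pderiv_mem_radical [Finite ι] [Finite κ]
    (E : MvPolynomial (ι ⊕ κ) K) (j : κ) :
    ∃ F : MvPolynomial κ K, F ≠ 0 ∧ rename Sum.inr F * pderiv (Sum.inr j) E ∈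
      (Ideal.span (insert E (Set.range fun i => pderiv (Sum.inl i) E))).radical := by
  set I := Ideal.span (insert E (Set.range fun i => pderiv (Sum.inl i) E))
  let S : Submonoid (MvPolynomial (ι ⊕ κ) K) :=
    (nonZeroDivisors (MvPolynomial κ K)).map (rename Sum.inr : _ →ₐ[K] MvPolynomial (ι ⊕ κ) K)
  have h (𝔭 : Ideal (MvPolynomial (ι ⊕ κ) K)) (_ : 𝔭.IsPrime) (hI : I ≤ 𝔭) :
      ∃ s ∈ S, s * pderiv (Sum.inr j) E ∈ 𝔭 := by
    obtain ⟨hE, hE'⟩ := Set.insert_subset_iff.1 (Ideal.span_le.1 hI)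
    obtain ⟨F, hF, hFE⟩ :=
      exists_rename_mul_pderiv_mem_of_isPrime hE (fun i => hE' (Set.mem_range_self i)) j
    exact ⟨_, ⟨F, mem_nonZeroDivisors_of_ne_zero hF, rfl⟩, hFE⟩
  obtain ⟨_, ⟨F, hF, rfl⟩, hFE⟩ := exists_mem_mul_mem_radical h
  exact ⟨F, nonZeroDivisors.ne_zero hF, hFE⟩

theorem hasDerivAt_eval_update {𝕜 σ : Type*} [NontriviallyNormedField 𝕜] [DecidableEq σ]
    (E : MvPolynomial σ 𝕜) (z : σ → 𝕜) (i : σ) (s : 𝕜) :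
    HasDerivAt (fun t => eval (Function.update z i t) E)
      (eval (Function.update z i s) (pderiv i E)) s := by
  induction E using MvPolynomial.induction_on with
  | C a => simpa using hasDerivAt_const s a
  | add p q hp hq => simpa using hp.fun_add hq
  | mul_X p l hp =>
    rcases eq_or_ne l i with rfl | hl
    · simpa [add_comm, mul_comm] using hp.fun_mul (hasDerivAt_id' s)
    · simpa [hl, mul_comm] using hp.mul_const (z l)

theorem eval_pderiv_inl_eq_zero_of_isLocalExtr {E : MvPolynomial (ι ⊕ κ) ℝ} {x : ι → ℝ}
    {c : κ → ℝ} (hE : IsLocalExtr (fun x' => eval (Sum.elim x' c) E) x) (i : ι) :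
    eval (Sum.elim x c) (pderiv (Sum.inl i) E) = 0 := by
  classical
  have hderiv := hasDerivAt_eval_update E (Sum.elim x c) (Sum.inl i) (x i)
  simp only [Sum.update_elim_inl, Function.update_eq_self] at hderiv
  have hcont : ContinuousAt (Function.update x i) (x i) := by fun_prop
  rw [← Function.update_eq_self i x] at hE
  exact IsLocalExtr.hasDerivAt_eq_zero (hE.comp_tendsto hcont) hderiv

theorem exists_ne_zero_eval_eq_zero_of_isLocalExtr [Finite ι] [Finite κ]
    (E : MvPolynomial (ι ⊕ κ) ℝ) (j : κ) :
    ∃ F : MvPolynomial κ ℝ, F ≠ 0 ∧ ∀ (x : ι → ℝ) (c : κ → ℝ), eval (Sum.elim x c) E = 0 →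
      IsLocalExtr (fun x' => eval (Sum.elim x' c) E) x →
      eval (Sum.elim x c) (pderiv (Sum.inr j) E) ≠ 0 → eval c F = 0 := by
  obtain ⟨F, hF, m, hFE⟩ := exists_rename_mul_pderiv_mem_radical E j
  refine ⟨F, hF, fun x c hE hmin hj => ?_⟩
  have hker : Ideal.span (insert E (Set.range fun i => pderiv (Sum.inl i) E)) ≤
      RingHom.ker (eval (Sum.elim x c)) := by
    rw [Ideal.span_le, Set.insert_subset_iff, Set.range_subset_iff]
    exact ⟨hE, eval_pderiv_inl_eq_zero_of_isLocalExtr hmin⟩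
  have hzero := hker hFE
  simp only [RingHom.mem_ker, map_pow, map_mul, eval_rename, Sum.elim_comp_inr] at hzero
  exact (mul_eq_zero.1 (eq_zero_of_pow_eq_zero hzero)).resolve_right hj

end Elimination

theorem exists_ne_zero_eval_eq_zero_of_tendsto {K : Type*} [Field K] [TopologicalSpace K]
    [IsTopologicalRing K] [T2Space K] {m : ℕ} {F : MvPolynomial (Fin (m + 1)) K} (hF : F ≠ 0) :
    ∃ F₀ : MvPolynomial (Fin m) K, F₀ ≠ 0 ∧
      ∀ (l : Filter K) [l.NeBot] (c : K → Fin m → K) (c₀ : Fin m → K), l ≤ 𝓝[≠] 0 →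
        Tendsto c l (𝓝 c₀) → (∀ᶠ d in l, eval (Fin.cons d (c d) : Fin (m + 1) → K) F = 0) →
        eval c₀ F₀ = 0 := by
  -- `F₀` is the value at `d = 0` of `F` divided by the largest power of its first variable `d`.
  obtain ⟨q, hq, hq'⟩ := Polynomial.exists_eq_pow_rootMultiplicity_mul_and_not_dvd
    (finSuccEquiv K m F) (by simpa using hF) 0
  simp only [map_zero, sub_zero, Polynomial.X_dvd_iff] at hq hq'
  let Q : MvPolynomial (Fin (m + 1)) K := (finSuccEquiv K m).symm q.divX
  have hfactor (d : K) (y : Fin m → K) : eval (Fin.cons d y : Fin (m + 1) → K) F =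
      d ^ Polynomial.rootMultiplicity 0 (finSuccEquiv K m F) *
        (d * eval (Fin.cons d y : Fin (m + 1) → K) Q + eval y (q.coeff 0)) := by
    rw [eval_eq_eval_mv_eval', eval_eq_eval_mv_eval', AlgEquiv.apply_symm_apply]
    conv_lhs => rw [hq, ← Polynomial.divX_mul_X_add q]
    simp [mul_comm d]
  refine ⟨q.coeff 0, hq', fun l _ c c₀ hl hc hzero => ?_⟩
  have hd : Tendsto id l (𝓝 (0 : K)) := hl.trans nhdsWithin_le_nhds
  have hcons : Tendsto (fun d => (Fin.cons d (c d) : Fin (m + 1) → K)) l (𝓝 (Fin.cons 0 c₀)) :=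
    hd.finCons hc
  have hlim := (hd.mul (((continuous_eval Q).tendsto _).comp hcons)).add
    (((continuous_eval (q.coeff 0)).tendsto _).comp hc)
  rw [zero_mul, zero_add] at hlim
  refine tendsto_nhds_unique hlim (tendsto_const_nhds.congr' ?_)
  filter_upwards [hzero, hl self_mem_nhdsWithin] with d hd hd0
  exact ((mul_eq_zero.1 ((hfactor d (c d)).symm.trans hd)).resolve_left (pow_ne_zero _ hd0)).symm

theorem tendsto_ciInf_add_mul {α : Type*} [Nonempty α] {u v : α → ℝ} (hu : BddBelow (Set.range u))
    (hv : ∀ i, 0 ≤ v i) :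
    Tendsto (fun d => ⨅ i, (u i + d * v i)) (𝓝[>] 0) (𝓝 (⨅ i, u i)) := by
  have hle {d : ℝ} (hd : 0 < d) (i : α) : u i ≤ u i + d * v i :=
    le_add_of_nonneg_right (mul_nonneg hd.le (hv i))
  refine tendsto_order.2 ⟨fun a ha => ?_, fun b hb => ?_⟩
  · filter_upwards [self_mem_nhdsWithin] with d hd
    exact ha.trans_le (ciInf_mono hu (hle hd))
  · obtain ⟨i, hi⟩ := exists_lt_of_ciInf_lt hb
    have hcont : Tendsto (fun d => u i + d * v i) (𝓝[>] 0) (𝓝 (u i + 0 * v i)) :=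
      Tendsto.mono_left (Continuous.tendsto (by fun_prop) 0) nhdsWithin_le_nhds
    rw [zero_mul, add_zero] at hcont
    filter_upwards [hcont.eventually_lt_const hi, self_mem_nhdsWithin] with d hdi hd
    exact (ciInf_le (hu.range_mono _ (hle hd)) i).trans_lt hdi

theorem isBigO_eval_pow_mul_eval {p q : Polynomial ℝ} {a : ℕ} (hp : p.natDegree ≤ a) (hq : q ≠ 0) :
    (fun w => p.eval w) =O[atTop] fun w => w ^ a * q.eval w := by
  have hdeg : p.degree ≤ (Polynomial.X ^ a * q).degree := by
    refine Polynomial.degree_le_natDegree.trans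
      (le_of_le_of_eq ?_ (Polynomial.degree_eq_natDegree (by simpa using hq)).symm)
    rw [Polynomial.natDegree_X_pow_mul _ hq]
    exact_mod_cast hp.trans (Nat.le_add_left _ _)
  simpa using Polynomial.isBigO_atTop_of_degree_le _ _ hdeg

theorem cauchyBound_le_sum {K : Type*} [NormedDivisionRing K] (p : Polynomial K) :
    (p.cauchyBound : ℝ) ≤
      (∑ i ∈ Finset.range p.natDegree, ‖p.coeff i‖) / ‖p.leadingCoeff‖ + 1 := by
  have hsup : (Finset.range p.natDegree).sup (fun i => ‖p.coeff i‖₊) ≤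
      ∑ i ∈ Finset.range p.natDegree, ‖p.coeff i‖₊ :=
    Finset.sup_le fun i hi => Finset.single_le_sum (f := fun i => ‖p.coeff i‖₊)
      (fun _ _ => zero_le) hi
  have hle : p.cauchyBound ≤
      (∑ i ∈ Finset.range p.natDegree, ‖p.coeff i‖₊) / ‖p.leadingCoeff‖₊ + 1 := by
    unfold Polynomial.cauchyBound
    gcongr
  simpa using NNReal.coe_le_coe.2 hle

theorem exists_cauchyBound_map_evalRingHom_isBigO {G : Polynomial (Polynomial ℝ)} (hG : G ≠ 0) :
    ∃ a : ℕ, (fun w : ℝ => ((G.map (Polynomial.evalRingHom w)).cauchyBound : ℝ)) =O[atTop]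
      fun w => w ^ a := by
  have hG' : G.leadingCoeff ≠ 0 := Polynomial.leadingCoeff_ne_zero.2 hG
  let a : ℕ := ∑ i ∈ Finset.range G.natDegree, (G.coeff i).natDegree
  have hterm (i : ℕ) (hi : i ∈ Finset.range G.natDegree) :
      (fun w => ‖(G.coeff i).eval w‖) =O[atTop] fun w => w ^ a * G.leadingCoeff.eval w :=
    (isBigO_eval_pow_mul_eval (Finset.single_le_sum (f := fun i => (G.coeff i).natDegree)
      (fun _ _ => Nat.zero_le _) hi) hG').norm_left
  obtain ⟨C, hC⟩ := (Asymptotics.IsBigO.sum hterm).bound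
  refine ⟨a, .of_bound (C + 1) ?_⟩
  filter_upwards [hC, Polynomial.eventually_atTop_not_isRoot _ hG', eventually_ge_atTop 1]
    with w hw hlead hw1
  have hbound := cauchyBound_le_sum (G.map (Polynomial.evalRingHom w))
  simp only [Polynomial.natDegree_map_of_leadingCoeff_ne_zero (Polynomial.evalRingHom w) hlead,
    Polynomial.leadingCoeff_map_of_leadingCoeff_ne_zero (Polynomial.evalRingHom w) hlead,
    Polynomial.coeff_map, Polynomial.coe_evalRingHom] at hbound
  have hpow : 1 ≤ w ^ a := one_le_pow₀ hw1
  rw [NNReal.norm_eq]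
  calc _ ≤ _ := hbound
    _ ≤ C * w ^ a + w ^ a := by
      gcongr
      rw [div_le_iff₀ (norm_pos_iff.2 hlead)]
      rw [Finset.sum_apply] at hw
      refine (le_abs_self _).trans (hw.trans_eq ?_)
      rw [norm_mul, Real.norm_of_nonneg (by positivity : 0 ≤ w ^ a), mul_assoc]
    _ = (C + 1) * ‖w ^ a‖ := by rw [Real.norm_of_nonneg (by positivity), add_mul, one_mul]

theorem eval_eq_evalEval_equivMvPolynomial_symm {R : Type*} [CommSemiring R]
    (F : MvPolynomial (Fin 2) R) (a b : R) :
    eval ![a, b] F = ((Polynomial.Bivariate.equivMvPolynomial R).symm F).evalEval a b := by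
  induction F using MvPolynomial.induction_on with
  | C r => simp
  | add p q hp hq => simp [hp, hq]
  | mul_X p i hp => fin_cases i <;> simp [hp, Polynomial.evalEval_C]

theorem exists_eventually_abs_le_mul_pow_of_eval_eq_zero {F : MvPolynomial (Fin 2) ℝ}
    (hF : F ≠ 0) :
    ∃ (C : ℝ) (a : ℕ), 0 ≤ C ∧ ∀ᶠ w in atTop, ∀ s, eval ![w, s] F = 0 → |s| ≤ C * w ^ a := by
  let G := (Polynomial.Bivariate.equivMvPolynomial ℝ).symm F
  have hG : G ≠ 0 := by simpa [G] using hF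
  obtain ⟨a, ha⟩ := exists_cauchyBound_map_evalRingHom_isBigO hG
  obtain ⟨C, hC0, hC⟩ := ha.exists_nonneg
  refine ⟨C, a, hC0, ?_⟩
  filter_upwards [hC.bound, Polynomial.eventually_atTop_not_isRoot _
    (Polynomial.leadingCoeff_ne_zero.2 hG), eventually_ge_atTop 0] with w hw hlead hw0 s hs
  have hroot : (G.map (Polynomial.evalRingHom w)).IsRoot s := by
    rw [Polynomial.IsRoot, Polynomial.map_evalRingHom_eval,
      ← eval_eq_evalEval_equivMvPolynomial_symm, hs]
  have hmap : G.map (Polynomial.evalRingHom w) ≠ 0 :=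
    fun h => hlead (by simpa using congrArg (fun p => p.coeff G.natDegree) h)
  rw [NNReal.norm_eq, Real.norm_of_nonneg (by positivity)] at hw
  exact (NNReal.coe_le_coe.2 (hroot.norm_lt_cauchyBound hmap).le).trans hw

theorem isCompact_setOf_sum_sq_le (ι : Type*) [Fintype ι] (B : ℝ) :
    IsCompact {x : ι → ℝ | ∑ i, x i ^ 2 ≤ B} := by
  refine Metric.isCompact_of_isClosed_isBounded
    (isClosed_le (by fun_prop) continuous_const) ?_
  refine (Metric.isBounded_closedBall (x := (0 : ι → ℝ)) (r := √B)).subset fun x hx => ?_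
  rw [mem_closedBall_zero_iff, pi_norm_le_iff_of_nonneg (Real.sqrt_nonneg B)]
  intro i
  refine Real.abs_le_sqrt (le_trans ?_ hx)
  exact Finset.single_le_sum (f := fun i => x i ^ 2) (fun _ _ => sq_nonneg _) (Finset.mem_univ i)

theorem dense_setOf_eval_ne_zero {σ : Type*} [Finite σ] {q : MvPolynomial σ ℝ} (hq : q ≠ 0) :
    Dense {x : σ → ℝ | eval x q ≠ 0} := by
  have := Fintype.ofFinite σ
  rw [Metric.dense_iff]
  intro x r hr
  by_contra! hempty
  refine hq (funext_set (fun i => Metric.ball (x i) r) (fun i => ?_) fun z hz => ?_)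
  · rw [Real.ball_eq_Ioo]
    exact Set.Ioo_infinite (by linarith)
  · rw [map_zero]
    by_contra hz0
    exact Set.eq_empty_iff_forall_notMem.1 hempty z ⟨(ball_pi x hr).symm ▸ hz, hz0⟩

section Penalty

variable {ι κ : Type*}

theorem pderiv_inr_rename_inl {R : Type*} [CommSemiring R] (P : MvPolynomial ι R) (j : κ) :
    pderiv (Sum.inr j) (rename Sum.inl P) = 0 := by
  classical
  refine pderiv_eq_zero_of_notMem_vars fun hj => ?_
  obtain ⟨i, -, hi⟩ := Finset.mem_image.1 (vars_rename Sum.inl P hj)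
  exact Sum.inl_ne_inr hi

variable {P p q : MvPolynomial ι ℝ}

theorem sq_div_sq_eq_inv_sq {f : (ι → ℝ) → ℝ} (hfpq : ∀ x, eval x q * f x = eval x p) {x : ι → ℝ}
    (hx : eval x p ≠ 0) :
    eval x q ^ 2 / eval x p ^ 2 = (f x ^ 2)⁻¹ := by
  have hq : eval x q ≠ 0 := fun h => hx (by rw [← hfpq, h, zero_mul])
  rw [← hfpq, mul_pow, div_mul_cancel_left₀ (pow_ne_zero 2 hq)]

theorem nonempty_eval_ne_zero [Finite ι] (hp : p ≠ 0) : Nonempty {x : ι → ℝ // eval x p ≠ 0} :=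
  (dense_setOf_eval_ne_zero hp).nonempty.to_subtype

variable [Fintype ι] {d s w : ℝ}

/-- The function `s P² + |x|² + (q² + d) / p²` minimised in the proof of the Łojasiewicz inequality
for `f = p / q`. For `d = 0` its last term is `1 / f²`; it is only meaningful where `p` does not
vanish, as division by zero yields `0`. -/
noncomputable def penalty (P p q : MvPolynomial ι ℝ) (d s : ℝ) (x : ι → ℝ) : ℝ :=
  s * eval x P ^ 2 + ∑ i, x i ^ 2 + (eval x q ^ 2 + d) / eval x p ^ 2

/-- The infimum of `penalty P p q d s` over the points where `p` does not vanish; its growth in `s`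
for `d = 0` yields the Łojasiewicz inequality. -/
noncomputable def minPenalty (P p q : MvPolynomial ι ℝ) (d s : ℝ) : ℝ :=
  ⨅ x : {x : ι → ℝ // eval x p ≠ 0}, penalty P p q d s x

/-- The polynomial `(penalty P p q d s - w) p²` in the variables `x` and the parameters
`(d, w, s)`, which are the variables `Sum.inr 0`, `Sum.inr 1` and `Sum.inr 2`. At a minimum of
`penalty P p q d s` with value `w` it vanishes together with its derivatives in `x`. -/
noncomputable def penaltyPoly (P p q : MvPolynomial ι ℝ) : MvPolynomial (ι ⊕ Fin 3) ℝ :=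
  (X (Sum.inr 2) * rename Sum.inl P ^ 2 + ∑ i, X (Sum.inl i) ^ 2 - X (Sum.inr 1)) *
    rename Sum.inl p ^ 2 + rename Sum.inl q ^ 2 + X (Sum.inr 0)

theorem eval_penaltyPoly (x : ι → ℝ) :
    eval (Sum.elim x ![d, w, s]) (penaltyPoly P p q) =
      (s * eval x P ^ 2 + ∑ i, x i ^ 2 - w) * eval x p ^ 2 + eval x q ^ 2 + d := by
  simp [penaltyPoly, eval_rename, Function.comp_def]

theorem eval_penaltyPoly_of_ne_zero {x : ι → ℝ} (hx : eval x p ≠ 0) :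
    eval (Sum.elim x ![d, w, s]) (penaltyPoly P p q) =
      (penalty P p q d s x - w) * eval x p ^ 2 := by
  rw [eval_penaltyPoly, penalty]
  field_simp
  ring

theorem pderiv_penaltyPoly :
    pderiv (Sum.inr 1) (penaltyPoly P p q) = -rename Sum.inl p ^ 2 := by
  simp [penaltyPoly, pderiv_inr_rename_inl, Derivation.leibniz_pow]

theorem penalty_nonneg (hd : 0 ≤ d) (hs : 0 ≤ s) (x : ι → ℝ) : 0 ≤ penalty P p q d s x := by
  unfold penalty
  positivity

theorem mul_eval_sq_le_penalty (hd : 0 ≤ d) (x : ι → ℝ) :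
    s * eval x P ^ 2 ≤ penalty P p q d s x := by
  rw [penalty, add_assoc]
  exact le_add_of_nonneg_right (by positivity)

theorem sum_sq_le_penalty (hd : 0 ≤ d) (hs : 0 ≤ s) (x : ι → ℝ) :
    ∑ i, x i ^ 2 ≤ penalty P p q d s x := by
  rw [penalty, add_right_comm]
  exact le_add_of_nonneg_left (by positivity)

theorem div_le_penalty (hs : 0 ≤ s) (x : ι → ℝ) :
    (eval x q ^ 2 + d) / eval x p ^ 2 ≤ penalty P p q d s x :=
  le_add_of_nonneg_left (by positivity)

theorem bddBelow_range_penalty (hd : 0 ≤ d) (hs : 0 ≤ s) :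
    BddBelow (Set.range fun x : {x : ι → ℝ // eval x p ≠ 0} => penalty P p q d s x) :=
  ⟨0, Set.forall_mem_range.2 fun _ => penalty_nonneg hd hs _⟩

theorem minPenalty_le (hd : 0 ≤ d) (hs : 0 ≤ s) {x : ι → ℝ} (hx : eval x p ≠ 0) :
    minPenalty P p q d s ≤ penalty P p q d s x :=
  ciInf_le (bddBelow_range_penalty hd hs) (⟨x, hx⟩ : {x : ι → ℝ // eval x p ≠ 0})

theorem exists_penalty_eq_minPenalty (hp : p ≠ 0) (hd : 0 < d) (hs : 0 ≤ s) :
    ∃ x, eval x p ≠ 0 ∧ penalty P p q d s x = minPenalty P p q d s := by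
  obtain ⟨x₁, hx₁⟩ := (dense_setOf_eval_ne_zero hp).nonempty
  set B := penalty P p q d s x₁
  have hPcont := continuous_eval P
  have hpcont := continuous_eval p
  have hqcont := continuous_eval q
  let K : Set (ι → ℝ) := {x | ∑ i, x i ^ 2 ≤ B} ∩ {x | d ≤ B * eval x p ^ 2}
  have hKp {x : ι → ℝ} (hx : x ∈ K) : eval x p ≠ 0 := by
    intro h
    have hdx : d ≤ B * eval x p ^ 2 := hx.2
    rw [h, zero_pow two_ne_zero, mul_zero] at hdx
    exact hdx.not_gt hd
  have hK : IsCompact K :=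
    (isCompact_setOf_sum_sq_le ι B).inter_right
      (isClosed_le continuous_const (by fun_prop))
  have hmem {x : ι → ℝ} (hx : eval x p ≠ 0) (hxB : penalty P p q d s x ≤ B) : x ∈ K := by
    have hdiv := (div_le_penalty hs x).trans hxB
    rw [div_le_iff₀ (by positivity)] at hdiv
    exact ⟨(sum_sq_le_penalty hd.le hs x).trans hxB,
      (le_add_of_nonneg_left (sq_nonneg _)).trans hdiv⟩
  have hcont : ContinuousOn (penalty P p q d s) K := by
    unfold penalty
    fun_prop (disch := intro x hx; exact pow_ne_zero 2 (hKp hx))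
  obtain ⟨x₀, hx₀, hmin⟩ := hK.exists_isMinOn ⟨x₁, hmem hx₁ le_rfl⟩ hcont
  have := nonempty_eval_ne_zero hp
  refine ⟨x₀, hKp hx₀, le_antisymm (le_ciInf fun x => ?_) (minPenalty_le hd.le hs (hKp hx₀))⟩
  rcases le_total (penalty P p q d s x) B with hxB | hxB
  · exact hmin (hmem x.2 hxB)
  · exact (hmin (hmem hx₁ le_rfl)).trans hxB

theorem penaltyPoly_nonneg (hd : 0 ≤ d) (hs : 0 ≤ s) (x : ι → ℝ) :
    0 ≤ eval (Sum.elim x ![d, minPenalty P p q d s, s]) (penaltyPoly P p q) := by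
  by_cases hx : eval x p = 0
  · rw [eval_penaltyPoly, hx]
    rw [zero_pow two_ne_zero, mul_zero, zero_add]
    positivity
  · rw [eval_penaltyPoly_of_ne_zero hx]
    exact mul_nonneg (sub_nonneg.2 (minPenalty_le hd hs hx)) (sq_nonneg _)

theorem exists_ne_zero_eval_minPenalty_eq_zero (hp : p ≠ 0) :
    ∃ F : MvPolynomial (Fin 3) ℝ, F ≠ 0 ∧
      ∀ d s, 0 < d → 0 ≤ s → eval ![d, minPenalty P p q d s, s] F = 0 := by
  obtain ⟨F, hF, hF0⟩ := exists_ne_zero_eval_eq_zero_of_isLocalExtr (penaltyPoly P p q) 1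
  refine ⟨F, hF, fun d s hd hs => ?_⟩
  obtain ⟨x, hx, hmin⟩ := exists_penalty_eq_minPenalty (P := P) (q := q) hp hd hs
  have hzero : eval (Sum.elim x ![d, minPenalty P p q d s, s]) (penaltyPoly P p q) = 0 := by
    rw [eval_penaltyPoly_of_ne_zero hx, hmin, sub_self, zero_mul]
  refine hF0 x _ hzero (.inl (.of_forall fun y => ?_)) ?_
  · simp only [hzero]
    exact penaltyPoly_nonneg hd.le hs y
  · simpa [pderiv_penaltyPoly, eval_rename] using hx

theorem tendsto_minPenalty (hp : p ≠ 0) (hs : 0 ≤ s) :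
    Tendsto (fun d => minPenalty P p q d s) (𝓝[>] 0) (𝓝 (minPenalty P p q 0 s)) := by
  have := nonempty_eval_ne_zero hp
  have hlim := tendsto_ciInf_add_mul (bddBelow_range_penalty (P := P) (p := p) (q := q) le_rfl hs)
    fun x => inv_nonneg.2 (sq_nonneg (eval x.1 p))
  refine hlim.congr fun d => iInf_congr fun x => ?_
  unfold penalty
  ring

theorem exists_ne_zero_eval_minPenalty_zero_eq_zero (hp : p ≠ 0) :
    ∃ G : MvPolynomial (Fin 2) ℝ, G ≠ 0 ∧
      ∀ s, 0 ≤ s → eval ![minPenalty P p q 0 s, s] G = 0 := by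
  obtain ⟨F, hF, hF0⟩ := exists_ne_zero_eval_minPenalty_eq_zero (P := P) (q := q) hp
  obtain ⟨G, hG, hG0⟩ := exists_ne_zero_eval_eq_zero_of_tendsto hF
  refine ⟨G, hG, fun s hs => ?_⟩
  refine hG0 (𝓝[>] 0) (fun d => ![minPenalty P p q d s, s]) _ (nhdsGT_le_nhdsNE 0) ?_ ?_
  · exact (tendsto_minPenalty hp hs).finCons tendsto_const_nhds
  · filter_upwards [self_mem_nhdsWithin] with d hd using hF0 d s hd hs

theorem tendsto_minPenalty_zero_atTop {f : (ι → ℝ) → ℝ} (hf : Continuous f) (hp : p ≠ 0)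
    (hfpq : ∀ x, eval x q * f x = eval x p) (hP : ∀ x, eval x P = 0 → f x = 0) :
    Tendsto (minPenalty P p q 0) atTop atTop := by
  have := nonempty_eval_ne_zero hp
  refine tendsto_atTop.2 fun B => ?_
  let K : Set (ι → ℝ) := {x | ∑ i, x i ^ 2 ≤ B} ∩ {x | 1 ≤ B * f x ^ 2}
  have hK : IsCompact K :=
    (isCompact_setOf_sum_sq_le ι B).inter_right (isClosed_le continuous_const (by fun_prop))
  have hKP (x : ι → ℝ) (hx : x ∈ K) : 0 < eval x P ^ 2 := by
    refine sq_pos_of_ne_zero fun h => ?_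
    have hfx : 1 ≤ B * f x ^ 2 := hx.2
    norm_num [hP x h] at hfx
  have hPcont := continuous_eval P
  obtain ⟨c, hc, hcK⟩ := hK.exists_forall_le' (by fun_prop) hKP
  filter_upwards [eventually_ge_atTop 0, eventually_ge_atTop (B / c)] with s hs hsB
  refine le_ciInf fun ⟨x, hx⟩ => ?_
  change B ≤ penalty P p q 0 s x
  by_contra! hlt
  have hxK : x ∈ K := by
    refine ⟨(sum_sq_le_penalty le_rfl hs x).trans hlt.le, ?_⟩
    have hdiv := (div_le_penalty hs x).trans hlt.le
    rw [add_zero, sq_div_sq_eq_inv_sq hfpq hx] at hdiv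
    have hfx : f x ≠ 0 := fun h => hx (by rw [← hfpq, h, mul_zero])
    exact (inv_le_iff_one_le_mul₀ (by positivity)).1 hdiv
  have hsP : B ≤ s * eval x P ^ 2 :=
    ((div_le_iff₀ hc).1 hsB).trans (mul_le_mul_of_nonneg_left (hcK x hxK) hs)
  exact hlt.not_ge (hsP.trans (mul_eval_sq_le_penalty le_rfl x))

theorem exists_eventually_le_mul_minPenalty_pow {f : (ι → ℝ) → ℝ} (hf : Continuous f)
    (hp : p ≠ 0) (hfpq : ∀ x, eval x q * f x = eval x p) (hP : ∀ x, eval x P = 0 → f x = 0) :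
    ∃ (C : ℝ) (a : ℕ), 0 ≤ C ∧ ∀ᶠ s in atTop, s ≤ C * minPenalty P p q 0 s ^ a := by
  obtain ⟨G, hG, hG0⟩ := exists_ne_zero_eval_minPenalty_zero_eq_zero (P := P) (q := q) hp
  obtain ⟨C, a, hC, hgrowth⟩ := exists_eventually_abs_le_mul_pow_of_eval_eq_zero hG
  refine ⟨C, a, hC, ?_⟩
  filter_upwards [(tendsto_minPenalty_zero_atTop hf hp hfpq hP).eventually hgrowth,
    eventually_ge_atTop 0] with s hs hs0
  exact (le_abs_self s).trans (hs s (hG0 s hs0))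

theorem exists_sq_pow_le_of_eval_ne_zero {f : (ι → ℝ) → ℝ} (hf : Continuous f) (hp : p ≠ 0)
    (hfpq : ∀ x, eval x q * f x = eval x p) (hP : ∀ x, eval x P = 0 → f x = 0) :
    ∃ (C r : ℝ) (a : ℕ), ∀ x, eval x p ≠ 0 → (f x ^ 2) ^ a ≤
      C * eval x P ^ 2 * (f x ^ 2 * (r * eval x P ^ 2 + 1 + ∑ i, x i ^ 2) + 1) ^ a := by
  obtain ⟨C, a, hC, hgrowth⟩ := exists_eventually_le_mul_minPenalty_pow hf hp hfpq hP
  obtain ⟨r, hr⟩ := eventually_atTop.1 (hgrowth.and (eventually_ge_atTop 0))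
  have hr0 : 0 ≤ r := (hr r le_rfl).2
  refine ⟨C, r, a, fun x hx => ?_⟩
  have hfx : f x ≠ 0 := fun h => hx (by rw [← hfpq, h, mul_zero])
  have hPx : eval x P ≠ 0 := fun h => hfx (hP x h)
  have hPinv : 0 ≤ (eval x P ^ 2)⁻¹ := by positivity
  set s := r + (eval x P ^ 2)⁻¹ with hs
  obtain ⟨hsC, hs0⟩ := hr s (by linarith)
  have hmin0 : 0 ≤ minPenalty P p q 0 s := Real.iInf_nonneg fun y => penalty_nonneg le_rfl hs0 _
  have hpenalty : f x ^ 2 * penalty P p q 0 s x =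
      f x ^ 2 * (r * eval x P ^ 2 + 1 + ∑ i, x i ^ 2) + 1 := by
    rw [penalty, add_zero, sq_div_sq_eq_inv_sq hfpq hx, hs]
    field_simp
  calc (f x ^ 2) ^ a = eval x P ^ 2 * (eval x P ^ 2)⁻¹ * (f x ^ 2) ^ a := by field_simp
    _ ≤ eval x P ^ 2 * (C * penalty P p q 0 s x ^ a) * (f x ^ 2) ^ a := by
      gcongr
      calc (eval x P ^ 2)⁻¹ ≤ s := by linarith
        _ ≤ C * minPenalty P p q 0 s ^ a := hsC
        _ ≤ C * penalty P p q 0 s x ^ a := by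
          gcongr
          exact minPenalty_le le_rfl hs0 hx
    _ = C * eval x P ^ 2 * (f x ^ 2 * penalty P p q 0 s x) ^ a := by ring
    _ = _ := by rw [hpenalty]

theorem exists_pow_le_mul_abs_eval {σ : Type*} [Finite σ] {P p q : MvPolynomial σ ℝ}
    {f : (σ → ℝ) → ℝ} (hf : Continuous f) (hq : q ≠ 0)
    (hfpq : ∀ x, eval x q * f x = eval x p) (hP : ∀ x, eval x P = 0 → f x = 0) :
    ∃ (N : ℕ) (C : (σ → ℝ) → ℝ), Continuous C ∧ ∀ x, |f x| ^ N ≤ C x * |eval x P| := by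
  have := Fintype.ofFinite σ
  rcases eq_or_ne p 0 with rfl | hp
  · have hf0 : f = 0 := hf.ext_on (dense_setOf_eval_ne_zero hq) continuous_zero fun x hx =>
      (mul_eq_zero.1 (by simpa using hfpq x)).resolve_left hx
    exact ⟨1, 0, continuous_zero, by simp [hf0]⟩
  · obtain ⟨C, r, a, hle⟩ := exists_sq_pow_le_of_eval_ne_zero hf hp hfpq hP
    have hPcont := continuous_eval P
    have hclosed : IsClosed {x | (f x ^ 2) ^ a ≤
        C * eval x P ^ 2 * (f x ^ 2 * (r * eval x P ^ 2 + 1 + ∑ i, x i ^ 2) + 1) ^ a} :=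
      isClosed_le (by fun_prop) (by fun_prop)
    have hle' (x : σ → ℝ) := hclosed.closure_subset_iff.2 hle (dense_setOf_eval_ne_zero hp x)
    refine ⟨2 * a, fun x => C * |eval x P| *
      (f x ^ 2 * (r * eval x P ^ 2 + 1 + ∑ i, x i ^ 2) + 1) ^ a, by fun_prop, fun x => ?_⟩
    calc |f x| ^ (2 * a) = (f x ^ 2) ^ a := by rw [pow_mul, sq_abs]
      _ ≤ C * (|eval x P| * |eval x P|) *
          (f x ^ 2 * (r * eval x P ^ 2 + 1 + ∑ i, x i ^ 2) + 1) ^ a := by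
        rw [abs_mul_abs_self, ← sq]
        exact hle' x
      _ = _ := by ring

end Penalty

section PowDivPow

variable {V : Type*} {f g C : V → ℝ} {N : ℕ}

theorem eq_zero_of_abs_pow_le (hle : ∀ x, |f x| ^ N ≤ C x * |g x|) {x : V} (hx : g x = 0) :
    f x = 0 := by
  have hfN := hle x
  rw [hx, abs_zero, mul_zero] at hfN
  exact abs_eq_zero.1 (eq_zero_of_pow_eq_zero (hfN.antisymm (by positivity)))

theorem abs_pow_div_pow_le (hle : ∀ x, |f x| ^ N ≤ C x * |g x|) {b j M : ℕ} (hM : N * b + j ≤ M)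
    {x : V} (hx : |f x| ≤ 1) : |f x ^ M / g x ^ b| ≤ |C x| ^ b * |f x| ^ j := by
  rw [abs_div, abs_pow, abs_pow]
  refine div_le_of_le_mul₀ (by positivity) (by positivity) ?_
  calc |f x| ^ M ≤ |f x| ^ (N * b + j) := pow_le_pow_of_le_one (abs_nonneg _) hx hM
    _ = (|f x| ^ N) ^ b * |f x| ^ j := by rw [pow_add, pow_mul]
    _ ≤ (|C x| * |g x|) ^ b * |f x| ^ j := by
      gcongr
      exact (hle x).trans (by gcongr; exact le_abs_self _)
    _ = |C x| ^ b * |f x| ^ j * |g x| ^ b := by ring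

theorem isBigO_pow_div_pow [TopologicalSpace V] (hC : Continuous C)
    (hle : ∀ x, |f x| ^ N ≤ C x * |g x|) (hf : Continuous f) {b j M : ℕ} (hM : N * b + j ≤ M)
    {x₀ : V} (hx₀ : f x₀ = 0) : (fun x => f x ^ M / g x ^ b) =O[𝓝 x₀] fun x => f x ^ j := by
  have hf1 : ∀ᶠ x in 𝓝 x₀, |f x| < 1 :=
    hf.abs.continuousAt.eventually_lt_const (by simp [hx₀])
  have hCb : ∀ᶠ x in 𝓝 x₀, |C x| ^ b < |C x₀| ^ b + 1 :=
    (hC.abs.pow b).continuousAt.eventually_lt_const (lt_add_one _)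
  refine .of_bound (|C x₀| ^ b + 1) ?_
  filter_upwards [hf1, hCb] with x hfx hCx
  rw [Real.norm_eq_abs, Real.norm_eq_abs, abs_pow (f x)]
  exact (abs_pow_div_pow_le hle hM hfx.le).trans (by gcongr)

theorem continuous_pow_div_pow [TopologicalSpace V] (hC : Continuous C)
    (hle : ∀ x, |f x| ^ N ≤ C x * |g x|) (hf : Continuous f) (hg : Continuous g) {b M : ℕ}
    (hM : N * b < M) : Continuous fun x => f x ^ M / g x ^ b := by
  refine continuous_iff_continuousAt.2 fun x₀ => ?_
  by_cases hx₀ : g x₀ = 0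
  · have hfx₀ := eq_zero_of_abs_pow_le hle hx₀
    have hlim : Tendsto (fun x => f x ^ 1) (𝓝 x₀) (𝓝 0) := by
      simpa [hfx₀] using hf.tendsto x₀
    rw [ContinuousAt, hfx₀, zero_pow (Nat.ne_zero_of_lt hM), zero_div]
    exact (isBigO_pow_div_pow hC hle hf hM hfx₀).trans_tendsto hlim
  · exact (hf.continuousAt.pow M).div (hg.continuousAt.pow b) (pow_ne_zero b hx₀)

variable [NormedAddCommGroup V] [NormedSpace ℝ V]

theorem hasFDerivAt_pow_div_pow (hC : Continuous C) (hle : ∀ x, |f x| ^ N ≤ C x * |g x|)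
    (hf : Differentiable ℝ f) (hg : Differentiable ℝ g) {b M : ℕ} (hM : N * b < M) (x₀ : V) :
    HasFDerivAt (fun x => f x ^ (M + 1) / g x ^ b)
      ((f x₀ ^ M / g x₀ ^ b) • ((M + 1 : ℝ) • fderiv ℝ f x₀) -
        (f x₀ ^ (M + 1) / g x₀ ^ (b + 1)) • ((b : ℝ) • fderiv ℝ g x₀)) x₀ := by
  by_cases hx₀ : g x₀ = 0
  · have hfx₀ := eq_zero_of_abs_pow_le hle hx₀
    have hf' : (fun x => f x ^ 2) =O[𝓝 x₀] fun x => ‖x - x₀‖ ^ 2 := by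
      simpa [hfx₀] using ((hf x₀).isBigO_sub.norm_right).pow 2
    have hquot := isBigO_pow_div_pow hC hle hf.continuous (show N * b + 2 ≤ M + 1 by lia) hfx₀
    simpa [hfx₀, Nat.ne_zero_of_lt hM] using (hquot.trans hf').hasFDerivAt one_lt_two
  · have hpow := (hf x₀).hasFDerivAt.pow (M + 1)
    have hinv := (hasDerivAt_zpow (-b) (g x₀) (.inl hx₀)).comp_hasFDerivAt x₀ (hg x₀).hasFDerivAt
    have hzpow : g x₀ ^ (-b - 1 : ℤ) = (g x₀ ^ (b + 1))⁻¹ := by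
      rw [← neg_add', zpow_neg]
      norm_cast
    refine ((hpow.fun_mul hinv).congr_fderiv ?_).congr_of_eventuallyEq (.of_forall fun x => ?_)
    · ext v
      simp only [Int.cast_neg, Int.cast_natCast, hzpow, neg_mul, neg_smul, smul_neg, zpow_neg,
        zpow_natCast, Function.comp_apply, add_tsub_cancel_right, nsmul_eq_mul, Nat.cast_add,
        Nat.cast_one, add_apply, neg_apply, smul_apply, smul_eq_mul, sub_apply]
      ring
    · simp [div_eq_mul_inv]

theorem contDiff_pow_div_pow (hC : Continuous C) (hle : ∀ x, |f x| ^ N ≤ C x * |g x|) {k : ℕ}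
    (hf : ContDiff ℝ k f) (hg : ContDiff ℝ k g) {b M : ℕ} (hM : N * (b + k) + k < M) :
    ContDiff ℝ k fun x => f x ^ M / g x ^ b := by
  induction k generalizing b M with
  | zero =>
    exact contDiff_zero.2 (continuous_pow_div_pow hC hle hf.continuous hg.continuous hM)
  | succ k ih =>
    obtain ⟨M, rfl⟩ := Nat.exists_eq_add_one_of_ne_zero (Nat.ne_zero_of_lt hM)
    have hMb : N * (b + k) + k < M := by nlinarith
    have hMb' : N * (b + 1 + k) + k < M + 1 := by linarith
    rw [Nat.cast_succ] at hf hg ⊢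
    have hk : ((k : ℕ) : WithTop ℕ∞) + 1 ≠ 0 := by simp
    refine contDiff_succ_iff_hasFDerivAt.2 ⟨_, ?_,
      hasFDerivAt_pow_div_pow hC hle (hf.differentiable hk) (hg.differentiable hk)
        (show N * b < M by nlinarith)⟩
    have hf' := hf.fderiv_right le_rfl
    have hg' := hg.fderiv_right le_rfl
    have hfk := hf.of_le le_self_add
    have hgk := hg.of_le le_self_add
    exact ((ih hfk hgk hMb).smul (hf'.const_smul _)).sub ((ih hfk hgk hMb').smul (hg'.const_smul _))

end PowDivPow

section Regulous

theorem eval_sum_sq_eq_zero_iff {R σ α : Type*} [CommRing R] [LinearOrder R] [IsStrictOrderedRing R]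
    {s : Finset α} {p : α → MvPolynomial σ R} {x : σ → R} :
    eval x (∑ i ∈ s, p i ^ 2) = 0 ↔ ∀ i ∈ s, eval x (p i) = 0 := by
  simp only [map_sum, map_pow]
  rw [Finset.sum_eq_zero_iff_of_nonneg fun i _ => sq_nonneg _]
  simp only [pow_eq_zero_iff two_ne_zero]

theorem exists_mem_forall_eval_eq_zero {R σ : Type*} [CommRing R] [LinearOrder R]
    [IsStrictOrderedRing R] {J : Ideal (MvPolynomial σ R)} (hJ : J.FG) :
    ∃ P ∈ J, ∀ x, eval x P = 0 → ∀ p ∈ J, eval x p = 0 := by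
  obtain ⟨s, rfl⟩ := hJ
  refine ⟨∑ p ∈ s, p ^ 2, Ideal.sum_mem _ fun p hp =>
    Ideal.pow_mem_of_mem _ (Ideal.subset_span hp) 2 two_pos, fun x hx => ?_⟩
  have hle : Ideal.span s ≤ RingHom.ker (eval x) :=
    Ideal.span_le.2 fun p hp => eval_sum_sq_eq_zero_iff.1 hx p hp
  exact fun p hp => hle hp

theorem IsRegulous.exists_pow_eq_eval_mul {n k : ℕ} {f : (Fin n → ℝ) → ℝ} (hf : IsRegulous n k f)
    {P : MvPolynomial (Fin n) ℝ} (hP : ∀ x, eval x P = 0 → f x = 0) :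
    ∃ (M : ℕ) (g : (Fin n → ℝ) → ℝ), IsRegulous n k g ∧ ∀ x, f x ^ M = eval x P * g x := by
  obtain ⟨hfk, p, q, hq, hfpq⟩ := hf
  rcases eq_or_ne P 0 with rfl | hP0
  · exact ⟨1, 0, (regulousRing n k).zero_mem, fun x => by simp [hP x]⟩
  obtain ⟨N, C, hC, hle⟩ := exists_pow_le_mul_abs_eval hfk.continuous hq hfpq hP
  set M := N * (1 + k) + k + 1
  have hmul (x : Fin n → ℝ) : f x ^ M = eval x P * (f x ^ M / eval x P ^ 1) := by
    by_cases hx : eval x P = 0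
    · rw [hx, zero_mul, hP x hx, zero_pow (Nat.succ_ne_zero _)]
    · rw [pow_one, mul_div_cancel₀ _ hx]
  have hPk : ContDiff ℝ k (fun x => eval x P) := (AnalyticOnNhd.eval_mvPolynomial P).contDiff
  refine ⟨M, _, ⟨contDiff_pow_div_pow hC hle hfk hPk (Nat.lt_succ_self _), p ^ M, q ^ M * P,
    mul_ne_zero (pow_ne_zero M hq) hP0, fun x => ?_⟩, hmul⟩
  rw [eval_mul, mul_assoc, ← hmul, eval_pow, eval_pow, ← mul_pow, hfpq]

theorem eq_zero_of_mem_radical_map {n k : ℕ} {A : Type*} [CommSemiring A] {J : Ideal A}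
    {ε : A →+* regulousRing n k} {f : regulousRing n k} (hf : f ∈ (Ideal.map ε J).radical)
    {x : Fin n → ℝ} (hx : ∀ a ∈ J, (ε a : (Fin n → ℝ) → ℝ) x = 0) :
    (f : (Fin n → ℝ) → ℝ) x = 0 := by
  let evalAt : regulousRing n k →+* ℝ :=
    (Pi.evalRingHom (fun _ => ℝ) x).comp (regulousRing n k).subtype
  have hle : Ideal.map ε J ≤ RingHom.ker evalAt := Ideal.map_le_iff_le_comap.2 hx
  exact (RingHom.ker_isPrime evalAt).isRadical.radical_le_iff.2 hle hf

theorem radical_of_extended_real_ideal_general (n k : ℕ) (J : Ideal (MvPolynomial (Fin n) ℝ))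
    (ε : MvPolynomial (Fin n) ℝ →+* regulousRing n k)
    (hε : ∀ (p : MvPolynomial (Fin n) ℝ) (x : Fin n → ℝ),
      (ε p : (Fin n → ℝ) → ℝ) x = eval x p) :
    ((Ideal.map ε J).radical : Set (regulousRing n k)) =
      {f : regulousRing n k |
        ∀ x : Fin n → ℝ, (∀ p ∈ J, eval x p = 0) → (f : (Fin n → ℝ) → ℝ) x = 0} := by
  refine Set.Subset.antisymm (fun f hf x hx => ?_) fun f hf => ?_
  · exact eq_zero_of_mem_radical_map hf fun p hp => (hε p x).trans (hx p hp)
  · obtain ⟨P, hPJ, hP⟩ := exists_mem_forall_eval_eq_zero (IsNoetherian.noetherian J)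
    obtain ⟨M, g, hg, hfg⟩ := f.2.exists_pow_eq_eval_mul fun x hx => hf x (hP x hx)
    have hfM : f ^ M = ε P * ⟨g, hg⟩ :=
      Subtype.ext (funext fun x => (hfg x).trans (congrArg (· * g x) (hε P x).symm))
    exact ⟨M, hfM ▸ Ideal.mul_mem_right _ _ (Ideal.mem_map_of_mem ε hPJ)⟩

end Regulous

/-- **Regulous functions, Théorème `radideal`**: let `J` be a real ideal of
`ℝ[x₁,…,xₙ]` and let `ε : ℝ[x₁,…,xₙ] → R^k(ℝⁿ)` be the ring homomorphism sending a
polynomial to its evaluation function. Then the radical of the ideal of `R^k(ℝⁿ)`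
generated by `ε(J)` is the ideal of `k`-regulous functions vanishing on
`Z(J) = {x | p(x) = 0 for all p ∈ J}`. -/
theorem radical_of_extended_real_ideal (n k : ℕ)
    (J : Ideal (MvPolynomial (Fin n) ℝ))
    (hJreal : ∀ (m : ℕ) (p : Fin m → MvPolynomial (Fin n) ℝ),
      (∑ i : Fin m, p i ^ 2) ∈ J → ∀ i : Fin m, p i ∈ J)
    (ε : MvPolynomial (Fin n) ℝ →+* regulousRing n k)
    (hε : ∀ (p : MvPolynomial (Fin n) ℝ) (x : Fin n → ℝ),
      (ε p : (Fin n → ℝ) → ℝ) x = eval x p) :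
    ((Ideal.map ε J).radical : Set (regulousRing n k)) =
      {f : regulousRing n k |
        ∀ x : Fin n → ℝ, (∀ p ∈ J, eval x p = 0) → (f : (Fin n → ℝ) → ℝ) x = 0} :=
  radical_of_extended_real_ideal_general n k J ε hε
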